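/- Let k ≥ 2 and 0 < n < 2k−2 be integers and let P be a positive definite integral binary quadratic form of discriminant d < 0 whose CM point τ_P satisfies Re(Mτ_P) ≠ 0 for all M ∈ SL₂(ℤ). Then the period r_n(f_{k,P}) = ∫₀^∞ f_{k,P}(iy) y^n dy is a real number if n is odd, and a purely imaginary number if n is even. (Equivalently, r_n(f_{k,P}^ε) = 0 where ε is the sign of (−1)^n and f_{k,P}^+ := ½(f_{k,P}+f_{k,P'}), f_{k,P}^− := (i/2)(f_{k,P}−f_{k,P'}) with P' := [a,−b,c].) -/

import Mathlib

open Complex MeasureTheory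
open scoped Real

noncomputable section

namespace LHMF

abbrev SL2Z := Matrix.SpecialLinearGroup (Fin 2) ℤ

/-- Möbius action of `SL₂(ℤ)` on `ℂ`. -/
def moeb (M : SL2Z) (τ : ℂ) : ℂ :=
  ((M.1 0 0 : ℂ) * τ + (M.1 0 1 : ℂ)) / ((M.1 1 0 : ℂ) * τ + (M.1 1 1 : ℂ))

/-- Automorphy factor `j(M,τ) = cτ + d`. -/
def jfac (M : SL2Z) (τ : ℂ) : ℂ := (M.1 1 0 : ℂ) * τ + (M.1 1 1 : ℂ)

/-- `E₁`: union of all `SL₂(ℤ)`-translates of the positive imaginary axis. -/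
def E1 : Set ℂ := ⋃ M : SL2Z, (fun y : ℝ => moeb M ((y : ℂ) * Complex.I)) '' Set.Ioi 0

/-- Wirtinger derivative `∂f/∂τ`. -/
def dtau (f : ℂ → ℂ) (τ : ℂ) : ℂ :=
  (fderiv ℝ f τ 1 - Complex.I * fderiv ℝ f τ Complex.I) / 2

/-- Wirtinger derivative `∂f/∂τ̄`. -/
def dtaubar (f : ℂ → ℂ) (τ : ℂ) : ℂ :=
  (fderiv ℝ f τ 1 + Complex.I * fderiv ℝ f τ Complex.I) / 2

/-- The operator `ξ_κ f = 2i v^κ conj(∂f/∂τ̄)`. -/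
def xiOp (κ : ℤ) (f : ℂ → ℂ) (τ : ℂ) : ℂ :=
  2 * Complex.I * ((τ.im : ℂ) ^ κ) * starRingEnd ℂ (dtaubar f τ)

/-- The operator `𝒟 = (1/(2πi)) ∂/∂τ`. -/
def Dop (f : ℂ → ℂ) : ℂ → ℂ := fun τ => (2 * (π : ℂ) * Complex.I)⁻¹ * dtau f τ

/-- Maass raising operator of weight `κ`. -/
def raiseOp (κ : ℤ) (f : ℂ → ℂ) (τ : ℂ) : ℂ :=
  2 * Complex.I * dtau f τ + (κ : ℂ) * (τ.im : ℂ)⁻¹ * f τ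

/-- Iterated raising operator `R_κ^m = R_{κ+2m-2} ∘ ⋯ ∘ R_{κ+2} ∘ R_κ`. -/
def raiseIter (κ : ℤ) : ℕ → (ℂ → ℂ) → (ℂ → ℂ)
  | 0 => fun f => f
  | m + 1 => fun f => raiseOp (κ + 2 * m) (raiseIter κ m f)

/-- Petersson's Poincaré series `H_{k,k-1}(z,τ)`. -/
def Hpet (k : ℕ) (z τ : ℂ) : ℂ :=
  ∑' M : SL2Z, jfac M τ ^ (2 * k - 2) * ((moeb M τ).im : ℂ) ^ (2 * k - 1) *
    (z - moeb M τ)⁻¹ * (z - starRingEnd ℂ (moeb M τ)) ^ (1 - 2 * (k : ℤ))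

/-- The locally harmonic Maass form `H_{1-k,n}`. -/
def Hlhmf (k n : ℕ) (τ : ℂ) : ℂ :=
  (2 * Complex.I) ^ (2 * k - 2) / (2 * (π : ℂ)) *
    ∫ y in Set.Ioi (0 : ℝ), Hpet k ((y : ℂ) * Complex.I) τ * (y : ℂ) ^ n

/-- The cusp form `R_n` of weight `2k`. -/
def Rnform (k n : ℕ) (τ : ℂ) : ℂ :=
  (2 : ℂ) ^ (2 * k - 3) / (Complex.I ^ (2 * k - 1 - n) * (Nat.choose (2 * k - 2) n : ℂ) * (π : ℂ)) *
    ∑' M : SL2Z, jfac M τ ^ (-2 * (k : ℤ)) * moeb M τ ^ (-(n : ℤ) - 1)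

/-- Holomorphic Eichler integral of `f` (weight `2k`), along a vertical path. -/
def eichlerHol (k : ℕ) (f : ℂ → ℂ) (τ : ℂ) : ℂ :=
  (-2 * (π : ℂ) * Complex.I) ^ (2 * k - 1) / (Nat.factorial (2 * k - 2) : ℂ) *
    ∫ t in Set.Ioi (0 : ℝ), f (τ + (t : ℂ) * Complex.I) * ((t : ℂ) * Complex.I) ^ (2 * k - 2) *
      Complex.I

/-- Non-holomorphic Eichler integral `f^*` of `f` (weight `2k`), along a vertical path. -/
def eichlerStar (k : ℕ) (f : ℂ → ℂ) (τ : ℂ) : ℂ :=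
  (-2 * Complex.I) ^ (1 - 2 * (k : ℤ)) *
    ∫ t in Set.Ioi (0 : ℝ),
      starRingEnd ℂ (f (-(starRingEnd ℂ (-(starRingEnd ℂ τ) + (t : ℂ) * Complex.I)))) *
        (-(starRingEnd ℂ τ) + (t : ℂ) * Complex.I + τ) ^ (2 * k - 2) * Complex.I

/-- Bernoulli polynomial evaluated at a complex number. -/
def bernC (m : ℕ) (τ : ℂ) : ℂ := Polynomial.aeval τ (Polynomial.bernoulli m)

/-- Periodized Bernoulli polynomial `𝔹_m(τ) = B_m(τ - ⌊Re τ⌋)`. -/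
def bernPer (m : ℕ) (τ : ℂ) : ℂ := bernC m (τ - (⌊τ.re⌋ : ℂ))

/-- The period `r_n(E_{2k})` of the Eisenstein series, for `0 < n < 2k-2`. -/
def rnE (k n : ℕ) : ℚ :=
  if n % 2 = 0 then 0
  else (-1) ^ ((n - 1) / 2) * (2 * (k : ℚ)) * bernoulli (n + 1) * bernoulli (2 * k - 1 - n) /
    (bernoulli (2 * k) * ((n : ℚ) + 1) * ((2 * k - 1 - n : ℕ) : ℚ))

/-- The local polynomial `P_{1-k,n}`. -/
def Ppoly (k n : ℕ) (τ : ℂ) : ℂ :=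
  (rnE k n : ℂ)
  + (-Complex.I) ^ (n + 1) / ((n : ℂ) + 1) * bernPer (n + 1) τ
  + Complex.I ^ (n + 1) / ((2 * k - 1 - n : ℕ) : ℂ) * bernPer (2 * k - 1 - n) τ
  + Complex.I ^ (1 - (n : ℤ)) / 2 *
      ∑' M : {M : SL2Z // 0 < M.1 0 0 * M.1 1 0 ∧ (moeb M τ).re < 0},
        jfac M.1 τ ^ (2 * k - 2) *
          (moeb M.1 τ ^ n - (-1 : ℂ) ^ n * moeb M.1 τ ^ (2 * k - 2 - n))

/-- The binary quadratic form `[a,b,c]` evaluated at complex arguments. -/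
def qfC (a b c : ℤ) (x y : ℂ) : ℂ := (a : ℂ) * x ^ 2 + (b : ℂ) * x * y + (c : ℂ) * y ^ 2

/-- CM point of the positive definite form `[a,b,c]`. -/
def cmPoint (a b c : ℤ) : ℂ :=
  (-(b : ℂ) + Complex.I * ((Real.sqrt (((b ^ 2 - 4 * a * c).natAbs : ℝ))) : ℂ)) / (2 * (a : ℂ))

/-- The form `[a,b,c] ∘ M`. -/
def qfComp (a b c : ℤ) (M : SL2Z) : ℤ × ℤ × ℤ :=
  (a * (M.1 0 0) ^ 2 + b * (M.1 0 0) * (M.1 1 0) + c * (M.1 1 0) ^ 2,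
   2 * a * (M.1 0 0) * (M.1 0 1) + b * ((M.1 0 0) * (M.1 1 1) + (M.1 0 1) * (M.1 1 0)) +
     2 * c * (M.1 1 0) * (M.1 1 1),
   a * (M.1 0 1) ^ 2 + b * (M.1 0 1) * (M.1 1 1) + c * (M.1 1 1) ^ 2)

/-- `w_P`: order of the stabilizer of `P = [a,b,c]` in `PSL₂(ℤ)` (half the order of the
stabilizer in `SL₂(ℤ)`, which contains `±1`). -/
def wP (a b c : ℤ) : ℕ := Nat.card {M : SL2Z // qfComp a b c M = (a, b, c)} / 2

/-- The meromorphic modular form `f_{k,P}` for `P = [a,b,c]`. -/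
def fkP (k : ℕ) (a b c : ℤ) (z : ℂ) : ℂ :=
  (((((b ^ 2 - 4 * a * c).natAbs : ℝ)) ^ ((k : ℝ) - 1 / 2) : ℝ) : ℂ) /
      (2 * (π : ℂ) * (wP a b c : ℂ)) *
    ∑' M : SL2Z, (qfC a b c ((M.1 0 0 : ℂ) * z + (M.1 0 1 : ℂ))
      ((M.1 1 0 : ℂ) * z + (M.1 1 1 : ℂ))) ^ (-(k : ℤ))

/-- The `n`-th period `r_n(f) = ∫₀^∞ f(iy) y^n dy`. -/
def periodN (n : ℕ) (f : ℂ → ℂ) : ℂ :=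
  ∫ y in Set.Ioi (0 : ℝ), f ((y : ℂ) * Complex.I) * (y : ℂ) ^ n

/-- Epstein zeta function of `[a,b,c]` at an integer `k`. -/
def epstein (a b c : ℤ) (k : ℕ) : ℝ :=
  ∑' p : {p : ℤ × ℤ // p ≠ (0, 0)},
    ((a * p.1.1 ^ 2 + b * p.1.1 * p.1.2 + c * p.1.2 ^ 2 : ℤ) : ℝ) ^ (-(k : ℤ))

/-- `sgn(M)` for `M = (a,b;c,d)`: `sgn(ac)` if `ac ≠ 0`, else `sgn(bd)`. -/
def sgnM (M : SL2Z) : ℤ :=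
  if M.1 0 0 * M.1 1 0 ≠ 0 then Int.sign (M.1 0 0 * M.1 1 0) else Int.sign (M.1 0 1 * M.1 1 1)

/-- Upper incomplete Gamma function `Γ(s,x)` for a natural number `s`. -/
def GammaUpper (s : ℕ) (x : ℝ) : ℝ := ∫ t in Set.Ioi x, Real.exp (-t) * t ^ (s - 1)

/-- A cusp form of weight `2k` for `SL₂(ℤ)`, as a function on `ℂ` (holomorphic on `ℍ`,
modular of weight `2k`, vanishing at the cusp `i∞`). -/
def IsCuspForm2k (k : ℕ) (f : ℂ → ℂ) : Prop :=
  (∀ τ : ℂ, 0 < τ.im → DifferentiableAt ℂ f τ) ∧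
  (∀ (M : SL2Z) (τ : ℂ), 0 < τ.im → f (moeb M τ) = jfac M τ ^ (2 * k) * f τ) ∧
  Filter.Tendsto f (Filter.comap Complex.im Filter.atTop) (nhds 0)

/-- the denominators -/
def gq (p : ℤ × ℤ × ℤ) : ℝ := (1 / (1 + (p.1 : ℝ) ^ 2)) * ((1 / (1 + (p.2.1 : ℝ) ^ 2)) * (1 / (1 + (p.2.2 : ℝ) ^ 2)))

lemma summable_one : Summable (fun n : ℤ => 1 / (1 + (n : ℝ) ^ 2)) := by
  have h := (Real.summable_one_div_int_pow (p := 2)).2 (by norm_num)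
  refine Summable.of_norm_bounded_eventually h ?_
  have : {(0:ℤ)}ᶜ ∈ (Filter.cofinite : Filter ℤ) := (Set.finite_singleton 0).compl_mem_cofinite
  filter_upwards [this] with n hn
  have hn' : (n : ℝ) ≠ 0 := by simpa using hn
  rw [Real.norm_of_nonneg (by positivity)]
  have : 0 < (n:ℝ)^2 := by positivity
  exact one_div_le_one_div_of_le this (by linarith)

lemma summable_gq : Summable gq := by
  have h1 := summable_one
  have p1 : (0 : ℤ → ℝ) ≤ (fun n : ℤ => 1 / (1 + (n : ℝ) ^ 2)) := fun n => by
    simp only [Pi.zero_apply]; positivity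
  have h2 := h1.mul_of_nonneg h1 p1 p1
  have h3 := h1.mul_of_nonneg h2 p1 (fun n => by simp only [Pi.zero_apply]; positivity)
  exact h3

def phi (u1 u2 v1 v2 : ℤ) : ℤ × ℤ × ℤ := (v1, v2, (u1 * v1 + u2 * v2) / (v1 ^ 2 + v2 ^ 2))

lemma phi_inj {u1 u2 v1 v2 w1 w2 x1 x2 : ℤ} (h1 : u1 * v2 - v1 * u2 = 1)
    (h2 : w1 * x2 - x1 * w2 = 1) (h : phi u1 u2 v1 v2 = phi w1 w2 x1 x2) :
    u1 = w1 ∧ u2 = w2 ∧ v1 = x1 ∧ v2 = x2 := by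
  simp only [phi, Prod.mk.injEq] at h
  obtain ⟨rfl, rfl, h⟩ := h
  have hq : v1 ^ 2 + v2 ^ 2 ≠ 0 := by
    intro h0
    have : v1 = 0 := by nlinarith [sq_nonneg v1, sq_nonneg v2]
    have : v2 = 0 := by nlinarith [sq_nonneg v1, sq_nonneg v2]
    subst_vars; simp_all
  -- difference is j * v
  set j : ℤ := u1 * w2 - w1 * u2 with hj
  have e1 : u1 = w1 + (-j) * v1 := by rw [hj]; linear_combination w1 * h1 - u1 * h2
  have e2 : u2 = w2 + (-j) * v2 := by rw [hj]; linear_combination w2 * h1 - u2 * h2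
  have e3 : u1 * v1 + u2 * v2 = (w1 * v1 + w2 * v2) + (-j) * (v1^2 + v2^2) := by
    rw [e1, e2]; ring
  rw [e3, Int.add_mul_ediv_right _ _ hq] at h
  have j0 : j = 0 := by linarith
  rw [j0] at e1 e2
  exact ⟨by linarith, by linarith, rfl, rfl⟩

lemma phi_bound {u1 u2 v1 v2 : ℤ} (h1 : u1 * v2 - v1 * u2 = 1)
    (h : v1 ^ 2 + v2 ^ 2 ≤ u1 ^ 2 + u2 ^ 2) :
    1 / (((u1 : ℝ) ^ 2 + (u2 : ℝ) ^ 2) * ((v1 : ℝ) ^ 2 + (v2 : ℝ) ^ 2)) ≤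
      15 * gq (phi u1 u2 v1 v2) := by
  have hq : 1 ≤ v1 ^ 2 + v2 ^ 2 := by
    by_contra h0
    have : v1 = 0 := by nlinarith [sq_nonneg v1, sq_nonneg v2]
    have : v2 = 0 := by nlinarith [sq_nonneg v1, sq_nonneg v2]
    subst_vars; simp_all
  simp only [phi, gq]
  set q := v1 ^ 2 + v2 ^ 2 with hqd
  set N := u1 * v1 + u2 * v2 with hN
  set m := N / q with hm
  have d1 : q * m ≤ N := by rw [hm]; exact Int.mul_ediv_self_le (by omega)
  have d2 : N < q * m + q := by rw [hm]; exact Int.lt_mul_ediv_self_add (by omega)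
  have id1 : (u1 ^ 2 + u2 ^ 2) * q = 1 + N ^ 2 := by
    rw [hqd, hN]; linear_combination (u1 * v2 - v1 * u2 + 1) * h1
  have b1 : q ^ 2 ≤ 1 + N ^ 2 := by nlinarith
  have b2 : (1 + m ^ 2) * q ^ 2 ≤ 5 * (1 + N ^ 2) := by
    -- q m = N - r, 0 ≤ r < q
    nlinarith [sq_nonneg (N + (N - q * m)), mul_nonneg (sub_nonneg.2 d1) (sub_nonneg.2 d2.le)]
  have b3 : (1 + v1 ^ 2) * (1 + v2 ^ 2) ≤ 3 * q ^ 2 := by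
    nlinarith [sq_nonneg (v1 ^ 2 - v2 ^ 2), sq_nonneg v1, sq_nonneg v2]
  have b4 : (1 + v1 ^ 2) * ((1 + v2 ^ 2) * (1 + m ^ 2)) ≤ 15 * ((u1 ^ 2 + u2 ^ 2) * q) := by
    rw [id1]; nlinarith [mul_le_mul_of_nonneg_right b3 (by positivity : 0 ≤ 1 + m ^ 2)]
  have b5 : (1 + (v1:ℝ) ^ 2) * ((1 + (v2:ℝ) ^ 2) * (1 + (m:ℝ) ^ 2)) ≤
      15 * (((u1:ℝ) ^ 2 + (u2:ℝ) ^ 2) * ((v1 : ℝ) ^ 2 + (v2 : ℝ) ^ 2)) := by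
    have := b4; rw [hqd] at this; exact_mod_cast this
  have hpos : 0 < (1 + (v1:ℝ) ^ 2) * ((1 + (v2:ℝ) ^ 2) * (1 + (m:ℝ) ^ 2)) := by positivity
  have hpos2 : 0 < (((u1:ℝ) ^ 2 + (u2:ℝ) ^ 2) * ((v1 : ℝ) ^ 2 + (v2 : ℝ) ^ 2)) := by linarith
  rw [one_div_mul_one_div, one_div_mul_one_div, mul_one_div, div_le_div_iff₀ hpos2 hpos]
  linarith

lemma det_eq (M : SL2Z) : M.1 0 0 * M.1 1 1 - M.1 0 1 * M.1 1 0 = 1 := by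
  have := M.2; rwa [Matrix.det_fin_two] at this

lemma SL_ext {M N : SL2Z} (h1 : M.1 0 0 = N.1 0 0) (h2 : M.1 1 0 = N.1 1 0)
    (h3 : M.1 0 1 = N.1 0 1) (h4 : M.1 1 1 = N.1 1 1) : M = N := by
  apply Subtype.ext; ext i j; fin_cases i <;> fin_cases j <;> assumption

def phi1 (M : SL2Z) : ℤ × ℤ × ℤ := phi (M.1 0 0) (M.1 1 0) (M.1 0 1) (M.1 1 1)
def phi2 (M : SL2Z) : ℤ × ℤ × ℤ := phi (M.1 0 1) (M.1 1 1) (-M.1 0 0) (-M.1 1 0)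

lemma phi1_inj : Function.Injective phi1 := fun M N h => by
  obtain ⟨h1, h2, h3, h4⟩ := phi_inj (det_eq M) (det_eq N) h
  exact SL_ext h1 h2 h3 h4

lemma phi2_inj : Function.Injective phi2 := fun M N h => by
  obtain ⟨h1, h2, h3, h4⟩ := phi_inj (by linarith [det_eq M]) (by linarith [det_eq N]) h
  exact SL_ext (by linarith) (by linarith) h1 h2

lemma countable_SL : Countable SL2Z := phi1_inj.countable

lemma gq_nonneg (p) : 0 ≤ gq p := by unfold gq; positivity

lemma summable_SL : Summable (fun M : SL2Z =>
    1 / (((M.1 0 0 : ℝ) ^ 2 + (M.1 1 0 : ℝ) ^ 2) * ((M.1 0 1 : ℝ) ^ 2 + (M.1 1 1 : ℝ) ^ 2))) := by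
  have h1 := summable_gq.comp_injective phi1_inj
  have h2 := summable_gq.comp_injective phi2_inj
  refine Summable.of_nonneg_of_le (fun M => by positivity) (fun M => ?_) ((h1.add h2).mul_left 15)
  simp only [Function.comp]
  have := gq_nonneg (phi1 M)
  have := gq_nonneg (phi2 M)
  rcases le_total (M.1 0 1 ^ 2 + M.1 1 1 ^ 2) (M.1 0 0 ^ 2 + M.1 1 0 ^ 2) with h | h
  · have := phi_bound (det_eq M) h
    rw [← phi1] at this
    linarith
  · have := phi_bound (u1 := M.1 0 1) (u2 := M.1 1 1) (v1 := -M.1 0 0) (v2 := -M.1 1 0)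
      (by linarith [det_eq M]) (by simpa using h)
    rw [← phi2, mul_comm] at this
    push_cast at this
    simp only [neg_sq] at this
    linarith
/-- integrand at complex argument -/
def qq (A B C : ℝ) (w : ℂ) : ℂ := C + I * B * w - A * w ^ 2
def gg (k n : ℕ) (A B C : ℝ) (w : ℂ) : ℂ := (qq A B C w) ^ (-(k : ℤ)) * w ^ n

lemma qq_ne {A B C : ℝ} (hA : 0 < A) (hB : 0 < B) (hC : 0 < C) {w : ℂ} (hw : w.im ≤ 0) :
    qq A B C w ≠ 0 := by
  intro h
  have h1 := congrArg Complex.re h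
  have h2 := congrArg Complex.im h
  simp [qq, pow_two] at h1 h2
  have h3 : w.re * (B - 2 * A * w.im) = 0 := by linarith
  have h4 : 0 < B - 2 * A * w.im := by nlinarith
  have h5 : w.re = 0 := by
    rcases mul_eq_zero.1 h3 with h | h
    · exact h
    · linarith
  rw [h5] at h1
  nlinarith [mul_nonneg hA.le (mul_self_nonneg w.im)]

lemma qq_lower {A B C : ℝ} (hA : 1 ≤ A) (hB : 0 < B) (hC : 0 < C) {w : ℂ}
    (hw : 1 ≤ ‖w‖) (hw2 : 2 * (B + C) ≤ ‖w‖) : ‖w‖ ^ 2 / 2 ≤ ‖qq A B C w‖ := by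
  have e : (A : ℂ) * w ^ 2 = (C + I * B * w) - qq A B C w := by unfold qq; ring
  have n1 : ‖(A : ℂ) * w ^ 2‖ = A * ‖w‖ ^ 2 := by
    simp [abs_of_nonneg (by linarith : 0 ≤ A)]
  have n2 : ‖(C : ℂ) + I * B * w‖ ≤ C + B * ‖w‖ := by
    refine (norm_add_le _ _).trans ?_
    simp [abs_of_pos hB, abs_of_pos hC]
  have n3 := norm_sub_le ((C : ℂ) + I * B * w) (qq A B C w)
  rw [← e, n1] at n3
  nlinarith [mul_le_mul_of_nonneg_right hA (sq_nonneg ‖w‖), mul_le_mul_of_nonneg_right hw2 (norm_nonneg w), mul_le_mul_of_nonneg_left hw hC.le]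

lemma gg_bound {k n : ℕ} (hn1 : n < 2 * k - 2) {A B C : ℝ} (hA : 1 ≤ A) (hB : 0 < B) (hC : 0 < C)
    {w : ℂ} {R : ℝ} (hR : 1 ≤ R) (hR2 : 2 * (B + C) ≤ R) (hw : R ≤ ‖w‖) :
    ‖gg k n A B C w‖ ≤ 2 ^ k / R ^ 2 := by
  have h1 := qq_lower hA hB hC (hR.trans hw) (hR2.trans hw)
  have hw0 : 1 ≤ ‖w‖ := hR.trans hw
  unfold gg
  rw [norm_mul, norm_pow, norm_zpow, zpow_neg, zpow_natCast]
  have h2 : (‖w‖ ^ 2 / 2) ^ k ≤ ‖qq A B C w‖ ^ k := pow_le_pow_left₀ (by positivity) h1 k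
  have h3 : ‖w‖ ^ n * ‖w‖ ^ 2 ≤ ‖w‖ ^ (2 * k) := by
    rw [← pow_add]; exact pow_le_pow_right₀ hw0 (by omega)
  have h4 : 0 < (‖w‖ ^ 2 / 2) ^ k := by positivity
  have h5 : (‖w‖ ^ 2 / 2) ^ k * 2 ^ k = ‖w‖ ^ (2 * k) := by
    rw [← mul_pow, pow_mul]; congr 1; ring
  have h6 : R ^ 2 ≤ ‖w‖ ^ 2 := pow_le_pow_left₀ (by linarith) hw 2
  have hR0 : 0 < R ^ 2 := by positivity
  rw [inv_mul_eq_div, div_le_div_iff₀ (h4.trans_le h2) hR0]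
  calc ‖w‖ ^ n * R ^ 2 ≤ ‖w‖ ^ n * ‖w‖ ^ 2 := by gcongr
    _ ≤ ‖w‖ ^ (2 * k) := h3
    _ ≤ 2 ^ k * ‖qq A B C w‖ ^ k := by rw [← h5, mul_comm]; gcongr

lemma qq_conj (A B C : ℝ) (y : ℝ) : (starRingEnd ℂ) (qq A B C y) = qq A B C (((-y : ℝ)) : ℂ) := by
  simp [qq]
lemma qq_conj2 (A B C : ℝ) (y : ℝ) : (starRingEnd ℂ) (qq A B C y) = qq A (-B) C (y : ℂ) := by
  simp [qq]

lemma gg_neg (k n : ℕ) (A B C : ℝ) (y : ℝ) :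
    gg k n A B C (((-y : ℝ)) : ℂ) = (-1) ^ n * (starRingEnd ℂ) (gg k n A B C y) := by
  unfold gg
  rw [map_mul, map_zpow₀, qq_conj, map_pow, conj_ofReal]
  push_cast
  rw [neg_pow (y : ℂ)]; ring

lemma gg_conj2 (k n : ℕ) (A B C : ℝ) (y : ℝ) :
    gg k n A (-B) C (y : ℂ) = (starRingEnd ℂ) (gg k n A B C y) := by
  unfold gg
  rw [map_mul, map_zpow₀, qq_conj2, map_pow, conj_ofReal]

lemma gg_diff (k n : ℕ) {A B C : ℝ} (hA : 0 < A) (hB : 0 < B) (hC : 0 < C) {w : ℂ}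
    (hw : w.im ≤ 0) : DifferentiableAt ℂ (gg k n A B C) w := by
  unfold gg
  refine DifferentiableAt.mul (DifferentiableAt.zpow ?_ (Or.inl (qq_ne hA hB hC hw))) (by fun_prop)
  unfold qq; fun_prop

lemma contour_bound {k n : ℕ} (hn1 : n < 2 * k - 2) {A B C : ℝ} (hA : 1 ≤ A) (hB : 0 < B)
    (hC : 0 < C) {R : ℝ} (hR : 1 ≤ R) (hR2 : 2 * (B + C) ≤ R) :
    ‖∫ x in (-R)..R, gg k n A B C (x : ℂ)‖ ≤ 4 * 2 ^ k / R := by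
  have h := Complex.integral_boundary_rect_eq_zero_of_differentiableOn (gg k n A B C)
    (⟨-R, -R⟩ : ℂ) (⟨R, 0⟩ : ℂ) (by
      intro w hw
      have : w.im ∈ Set.uIcc (-R) 0 := (Complex.mem_reProdIm.1 hw).2
      rw [Set.uIcc_of_le (by linarith)] at this
      exact (gg_diff k n (by linarith) hB hC this.2).differentiableWithinAt)
  simp only [ofReal_zero, zero_mul, add_zero, smul_eq_mul] at h
  have b1 : ‖∫ x in (-R)..R, gg k n A B C (x + ((-R : ℝ) : ℂ) * I)‖ ≤ 2 ^ k / R ^ 2 * |R - -R| := by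
    refine intervalIntegral.norm_integral_le_of_norm_le_const fun x _ => gg_bound hn1 hA hB hC hR hR2 ?_
    refine le_trans ?_ (Complex.abs_im_le_norm _)
    simp [abs_of_pos (by linarith : 0 < R)]
  have b2 : ‖∫ y in (-R)..0, gg k n A B C ((R : ℂ) + y * I)‖ ≤ 2 ^ k / R ^ 2 * |0 - -R| := by
    refine intervalIntegral.norm_integral_le_of_norm_le_const fun x _ => gg_bound hn1 hA hB hC hR hR2 ?_
    refine le_trans ?_ (Complex.abs_re_le_norm _)
    simp [le_abs_self]
  have b3 : ‖∫ y in (-R)..0, gg k n A B C (((-R : ℝ) : ℂ) + y * I)‖ ≤ 2 ^ k / R ^ 2 * |0 - -R| := by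
    refine intervalIntegral.norm_integral_le_of_norm_le_const fun x _ => gg_bound hn1 hA hB hC hR hR2 ?_
    refine le_trans ?_ (Complex.abs_re_le_norm _)
    simp [le_abs_self]
  rw [show R - -R = 2 * R by ring, abs_of_pos (by linarith)] at b1
  rw [show 0 - -R = R by ring, abs_of_pos (by linarith)] at b2 b3
  have h' : ∫ x in (-R)..R, gg k n A B C (x : ℂ) =
      (∫ x in (-R)..R, gg k n A B C (x + ((-R : ℝ) : ℂ) * I))
      + I * (∫ y in (-R)..0, gg k n A B C ((R : ℂ) + y * I))
      - I * (∫ y in (-R)..0, gg k n A B C (((-R : ℝ) : ℂ) + y * I)) := by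
    linear_combination -h
  rw [h']
  refine (norm_sub_le _ _).trans ?_
  refine (add_le_add_left (norm_add_le _ _) _).trans ?_
  rw [norm_mul, norm_mul, norm_I, one_mul, one_mul]
  have : 4 * 2 ^ k / R = 2 ^ k / R ^ 2 * (2 * R) + 2 ^ k / R ^ 2 * R + 2 ^ k / R ^ 2 * R := by
    have : R ≠ 0 := by linarith
    field_simp; ring
  rw [this]; gcongr

lemma J_pos {k n : ℕ} (hn1 : n < 2 * k - 2) {A B C : ℝ} (hA : 1 ≤ A) (hB : 0 < B) (hC : 0 < C)
    (hi : IntegrableOn (fun y : ℝ => gg k n A B C (y : ℂ)) (Set.Ioi 0)) :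
    (∫ y in Set.Ioi (0 : ℝ), gg k n A B C (y : ℂ)) +
      (-1) ^ n * (starRingEnd ℂ) (∫ y in Set.Ioi (0 : ℝ), gg k n A B C (y : ℂ)) = 0 := by
  have ht := intervalIntegral_tendsto_integral_Ioi (b := fun R : ℝ => R) 0 hi Filter.tendsto_id
  have ht2 := ht.add ((((Complex.continuous_conj.tendsto _).comp ht)).const_mul ((-1 : ℂ) ^ n))
  have hcont : Continuous (fun y : ℝ => gg k n A B C (y : ℂ)) := by
    rw [continuous_iff_continuousAt]; intro y
    exact ContinuousAt.comp (f := fun y : ℝ => (y : ℂ))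
      (gg_diff k n (by linarith) hB hC (w := (y : ℂ)) (by simp)).continuousAt
      Complex.continuous_ofReal.continuousAt
  refine tendsto_nhds_unique ht2 ?_
  have hlim : Filter.Tendsto (fun R : ℝ => 4 * 2 ^ k / R) Filter.atTop (nhds 0) :=
    Filter.Tendsto.const_div_atTop Filter.tendsto_id _
  refine squeeze_zero_norm' ?_ hlim
  filter_upwards [Filter.eventually_ge_atTop (1 : ℝ), Filter.eventually_ge_atTop (2 * (B + C))]
    with R h1 h2
  refine le_of_eq_of_le ?_ (contour_bound (n := n) hn1 hA hB hC h1 h2)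
  congr 1
  rw [← intervalIntegral.integral_add_adjacent_intervals (a := -R) (b := 0) (c := R)
    (hcont.intervalIntegrable _ _) (hcont.intervalIntegrable _ _), add_comm]
  congr 1
  have := intervalIntegral.integral_comp_neg (a := 0) (b := R) (fun y : ℝ => gg k n A B C (y : ℂ))
  rw [neg_zero] at this
  rw [← this]
  simp only [gg_neg, Function.comp]
  rw [intervalIntegral.integral_const_mul]
  congr 1
  rw [intervalIntegral.integral_of_le (by linarith), intervalIntegral.integral_of_le (by linarith),
    integral_conj]

lemma J_all {k n : ℕ} (hn1 : n < 2 * k - 2) {A B C : ℝ} (hA : 1 ≤ A) (hB : B ≠ 0) (hC : 0 < C)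
    (hi : IntegrableOn (fun y : ℝ => gg k n A B C (y : ℂ)) (Set.Ioi 0)) :
    (∫ y in Set.Ioi (0 : ℝ), gg k n A B C (y : ℂ)) +
      (-1) ^ n * (starRingEnd ℂ) (∫ y in Set.Ioi (0 : ℝ), gg k n A B C (y : ℂ)) = 0 := by
  rcases lt_or_gt_of_ne hB with h | h
  · have e : ∀ y : ℝ, gg k n A (-B) C (y : ℂ) = _ := gg_conj2 k n A B C
    have hi' : IntegrableOn (fun y : ℝ => gg k n A (-B) C (y : ℂ)) (Set.Ioi 0) := by
      simp only [e]
      exact (Complex.conjCLE.toContinuousLinearMap.integrable_comp hi)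
    have := J_pos hn1 hA (by linarith : 0 < -B) hC hi'
    simp only [e] at this
    rw [integral_conj] at this
    have := congrArg (starRingEnd ℂ) this
    simpa using this
  · exact J_pos hn1 hA h hC hi

/-- norm lower bound on the real line -/
lemma qq_real_lower {A B C D : ℝ} (hD : 0 ≤ D) (hB : 1 ≤ B ^ 2) (hdisc : 4 * A * C = B ^ 2 + D)
    (y : ℝ) : (C + A * y ^ 2) ^ 2 ≤ (D + 1) * ‖qq A B C y‖ ^ 2 := by
  have : ‖qq A B C y‖ ^ 2 = (C - A * y ^ 2) ^ 2 + (B * y) ^ 2 := by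
    rw [Complex.sq_norm, Complex.normSq_apply]
    simp [qq, pow_two]
  rw [this]
  have h1 : (C + A * y ^ 2) ^ 2 = (C - A * y ^ 2) ^ 2 + (B^2 + D) * y ^ 2 := by
    rw [← hdisc]; ring
  have : 0 ≤ D * (B ^ 2 - 1) * y ^ 2 :=
    mul_nonneg (mul_nonneg hD (by linarith)) (sq_nonneg _)
  nlinarith [mul_nonneg hD (sq_nonneg (C - A * y ^ 2))]

lemma gg_norm_le {k n : ℕ} (hn0 : 0 < n) (hn1 : n < 2 * k - 2) {A B C D : ℝ} (hA : 1 ≤ A)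
    (hC : 1 ≤ C) (hD : 0 ≤ D) (hB : 1 ≤ B ^ 2) (hdisc : 4 * A * C = B ^ 2 + D) {y : ℝ}
    (hy : 0 < y) : ‖gg k n A B C y‖ ≤ (Real.sqrt (D + 1)) ^ k * (y / (C + A * y ^ 2) ^ 2) := by
  have h1 := qq_real_lower hD hB hdisc y
  set X := C + A * y ^ 2 with hX
  have hX1 : 1 + y ^ 2 ≤ X := by nlinarith [sq_nonneg y]
  have hX0 : 0 < X := by nlinarith [sq_nonneg y]
  have h2 : X ≤ Real.sqrt (D + 1) * ‖qq A B C y‖ := by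
    refine (abs_le_of_sq_le_sq' ?_ (by positivity)).2
    rw [mul_pow, Real.sq_sqrt (by linarith)]; exact h1
  have hs : 0 < Real.sqrt (D + 1) := Real.sqrt_pos.2 (by linarith)
  have hq : 0 < ‖qq A B C y‖ := by
    by_contra h
    have : ‖qq A B C y‖ = 0 := le_antisymm (not_lt.1 h) (norm_nonneg _)
    rw [this] at h2; linarith
  have h3 : X ^ k ≤ Real.sqrt (D + 1) ^ k * ‖qq A B C y‖ ^ k := by
    rw [← mul_pow]; exact pow_le_pow_left₀ hX0.le h2 k
  obtain ⟨m, rfl⟩ : ∃ m, n = m + 1 := ⟨n - 1, by omega⟩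
  obtain ⟨l, rfl⟩ : ∃ l, k = l + 2 := ⟨k - 2, by omega⟩
  have h4 : y ^ m ≤ X ^ l := by
    rcases le_total y 1 with h | h
    · exact (pow_le_one₀ hy.le h).trans (one_le_pow₀ (by nlinarith [sq_nonneg y]))
    · calc y ^ m ≤ y ^ (2 * l) := pow_le_pow_right₀ h (by omega)
        _ = (y ^ 2) ^ l := pow_mul _ _ _
        _ ≤ X ^ l := pow_le_pow_left₀ (by positivity) (by linarith) l
  unfold gg
  rw [norm_mul, norm_pow, norm_zpow, zpow_neg, zpow_natCast, inv_mul_eq_div, mul_div_assoc',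
    div_le_div_iff₀ (by positivity) (by positivity)]
  have hny : ‖(y : ℂ)‖ = y := by simp [abs_of_pos hy]
  rw [hny]
  calc y ^ (m + 1) * X ^ 2 = y ^ m * (y * X ^ 2) := by ring
    _ ≤ X ^ l * (y * X ^ 2) := by gcongr
    _ = X ^ (l + 2) * y := by ring
    _ ≤ (Real.sqrt (D + 1) ^ (l + 2) * ‖qq A B C y‖ ^ (l + 2)) * y := by gcongr
    _ = _ := by ring

lemma base_int {A C : ℝ} (hA : 0 < A) (hC : 0 < C) :
    IntegrableOn (fun y : ℝ => y / (C + A * y ^ 2) ^ 2) (Set.Ioi 0) ∧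
    ∫ y in Set.Ioi (0 : ℝ), y / (C + A * y ^ 2) ^ 2 = 1 / (2 * (A * C)) := by
  have hne : ∀ y : ℝ, C + A * y ^ 2 ≠ 0 := fun y => by positivity
  have hder : ∀ y ∈ Set.Ici (0:ℝ), HasDerivAt (fun y : ℝ => -(1 / (2 * A)) * (C + A * y ^ 2)⁻¹)
      (y / (C + A * y ^ 2) ^ 2) y := fun y _ => by
    have h1 : HasDerivAt (fun y : ℝ => C + A * y ^ 2) (A * (2 * y)) y := by
      simpa using ((hasDerivAt_pow 2 y).const_mul A).const_add C
    refine ((h1.inv (hne y)).const_mul (-(1 / (2 * A)))).congr_deriv ?_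
    have h2 : A ≠ 0 := hA.ne'
    have h3 : (C + A * y ^ 2) ^ 2 ≠ 0 := pow_ne_zero 2 (hne y)
    generalize (C + A * y ^ 2) ^ 2 = Z at h3 ⊢
    field_simp
  have hpos : ∀ y ∈ Set.Ioi (0:ℝ), 0 ≤ y / (C + A * y ^ 2) ^ 2 := fun y hy => by
    have : 0 < y := hy
    positivity
  have hlim : Filter.Tendsto (fun y : ℝ => -(1 / (2 * A)) * (C + A * y ^ 2)⁻¹) Filter.atTop
      (nhds (-(1 / (2 * A)) * 0)) := by
    refine Filter.Tendsto.const_mul _ (Filter.Tendsto.comp tendsto_inv_atTop_zero ?_)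
    exact Filter.tendsto_atTop_add_const_left _ _
      ((Filter.tendsto_pow_atTop (by norm_num)).const_mul_atTop hA)
  refine ⟨integrableOn_Ioi_deriv_of_nonneg' hder hpos hlim, ?_⟩
  rw [integral_Ioi_of_hasDerivAt_of_nonneg' hder hpos hlim]
  simp; field_simp

lemma gg_integrable {k n : ℕ} (hn0 : 0 < n) (hn1 : n < 2 * k - 2) {A B C D : ℝ} (hA : 1 ≤ A)
    (hC : 1 ≤ C) (hD : 0 ≤ D) (hB : 1 ≤ B ^ 2) (hdisc : 4 * A * C = B ^ 2 + D) :
    IntegrableOn (fun y : ℝ => gg k n A B C (y : ℂ)) (Set.Ioi 0) ∧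
    ∫ y in Set.Ioi (0 : ℝ), ‖gg k n A B C (y : ℂ)‖ ≤
      (Real.sqrt (D + 1)) ^ k * (1 / (2 * (A * C))) := by
  obtain ⟨b1, b2⟩ := base_int (by linarith : 0 < A) (by linarith : 0 < C)
  have b3 := b1.const_mul ((Real.sqrt (D + 1)) ^ k)
  have hb : ∀ᵐ (y : ℝ) ∂(volume.restrict (Set.Ioi (0 : ℝ))), ‖gg k n A B C (y : ℂ)‖ ≤
      (Real.sqrt (D + 1)) ^ k * (y / (C + A * y ^ 2) ^ 2) :=
    (ae_restrict_iff' measurableSet_Ioi).2 (Filter.Eventually.of_forall fun y hy =>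
      gg_norm_le hn0 hn1 hA hC hD hB hdisc hy)
  constructor
  · refine b3.mono' (Measurable.aestronglyMeasurable ?_) hb
    unfold gg qq
    measurability
  · refine (integral_mono_of_nonneg (Filter.Eventually.of_forall fun y => norm_nonneg _) b3 hb).trans ?_
    rw [integral_const_mul, b2]

lemma qfP_lower {a b c : ℤ} (hd : b ^ 2 - 4 * a * c < 0) (x y : ℤ) :
    ((4 * a * c - b ^ 2 : ℤ) : ℝ) * ((x : ℝ) ^ 2 + (y : ℝ) ^ 2) ≤
      (4 * (a + c) : ℝ) * ((a * x ^ 2 + b * x * y + c * y ^ 2 : ℤ) : ℝ) := by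
  push_cast
  nlinarith [sq_nonneg (2 * (a : ℝ) * x + b * y), sq_nonneg ((b : ℝ) * x + 2 * c * y)]

lemma qf_pos {a b c : ℤ} (ha : 0 < a) (hd : b ^ 2 - 4 * a * c < 0) {x y : ℤ}
    (h : ¬ (x = 0 ∧ y = 0)) : 1 ≤ a * x ^ 2 + b * x * y + c * y ^ 2 := by
  have e : 4 * a * (a * x ^ 2 + b * x * y + c * y ^ 2) =
    (2 * a * x + b * y) ^ 2 + (4 * a * c - b ^ 2) * y ^ 2 := by ring
  have hpos : 0 < (2 * a * x + b * y) ^ 2 + (4 * a * c - b ^ 2) * y ^ 2 := by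
    by_cases hy : y = 0
    · have hx : x ≠ 0 := fun hx => h ⟨hx, hy⟩
      subst hy
      have : 2 * a * x ≠ 0 := by positivity
      have := sq_pos_iff.2 this
      linarith
    · have : 0 < y ^ 2 := by positivity
      nlinarith [sq_nonneg (2 * a * x + b * y), mul_pos (sub_pos.2 (sub_neg.1 hd)) this]
  rw [← e] at hpos
  have := pos_of_mul_pos_right hpos (by linarith)
  omega

lemma B_ne {a b c : ℤ} (ha : 0 < a) (hd : b ^ 2 - 4 * a * c < 0)
    (hre : ∀ M : SL2Z, (moeb M (cmPoint a b c)).re ≠ 0) (M : SL2Z) :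
    (qfComp a b c M).2.1 ≠ 0 := by
  intro h0
  apply hre M⁻¹
  have hdet := det_eq M
  simp only [qfComp] at h0
  have hs : Real.sqrt (((b ^ 2 - 4 * a * c).natAbs : ℝ)) ^ 2 = 4 * a * c - b ^ 2 := by
    rw [Real.sq_sqrt (by positivity)]
    have : ((b ^ 2 - 4 * a * c).natAbs : ℤ) = 4 * a * c - b ^ 2 := by
      rw [Int.natCast_natAbs, abs_of_neg hd]; ring
    have h2 : (((b ^ 2 - 4 * a * c).natAbs : ℤ) : ℝ) = ((4 * a * c - b ^ 2 : ℤ) : ℝ) := by rw [this]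
    rw [Int.cast_natCast] at h2
    rw [h2]; push_cast; ring
  have haR : (a : ℝ) ≠ 0 := by exact_mod_cast ha.ne'
  have hτ : cmPoint a b c =
      (⟨-(b : ℝ) / (2 * a), Real.sqrt (((b ^ 2 - 4 * a * c).natAbs : ℝ)) / (2 * a)⟩ : ℂ) := by
    unfold cmPoint
    have : (2 * (a : ℂ)) = ((2 * a : ℝ) : ℂ) := by push_cast; ring
    rw [this]
    apply Complex.ext
    · rw [Complex.div_ofReal_re]; simp
    · rw [Complex.div_ofReal_im]; simp
  rw [hτ]
  generalize Real.sqrt (((b ^ 2 - 4 * a * c).natAbs : ℝ)) = s at hs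
  have hB : (2 * a * (M.1 0 0) * (M.1 0 1) + b * ((M.1 0 0) * (M.1 1 1) + (M.1 0 1) * (M.1 1 0)) +
     2 * c * (M.1 1 0) * (M.1 1 1) : ℝ) = 0 := by exact_mod_cast h0
  unfold moeb
  rw [Matrix.SpecialLinearGroup.SL2_inv_expl]
  simp only [Matrix.of_apply, Matrix.cons_val', Matrix.cons_val_zero, Matrix.cons_val_one,
    Matrix.cons_val_fin_one]
  rw [Complex.div_re, ← add_div]
  apply div_eq_zero_iff.2
  left
  simp
  field_simp
  linear_combination (-2 * a) * hB - (M.1 1 0 : ℝ) * (M.1 1 1) * hs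

lemma qfC_eq (a b c : ℤ) (M : SL2Z) (y : ℝ) :
    qfC a b c ((M.1 0 0 : ℂ) * (y * I) + (M.1 0 1 : ℂ)) ((M.1 1 0 : ℂ) * (y * I) + (M.1 1 1 : ℂ)) =
      qq (((qfComp a b c M).1 : ℤ) : ℝ) (((qfComp a b c M).2.1 : ℤ) : ℝ)
        (((qfComp a b c M).2.2 : ℤ) : ℝ) y := by
  unfold qfC qq qfComp
  push_cast
  linear_combination ((a : ℂ) * (M.1 0 0) ^ 2 + b * (M.1 0 0) * (M.1 1 0) + c * (M.1 1 0) ^ 2) *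
    y ^ 2 * I_sq

lemma conj_period (k n : ℕ) (hn0 : 0 < n) (hn1 : n < 2 * k - 2)
    (a b c : ℤ) (ha : 0 < a) (hd : b ^ 2 - 4 * a * c < 0)
    (hre : ∀ M : SL2Z, (moeb M (cmPoint a b c)).re ≠ 0) :
    periodN n (fkP k a b c) + (-1) ^ n * (starRingEnd ℂ) (periodN n (fkP k a b c)) = 0 := by
  haveI : Countable SL2Z := countable_SL
  set F : SL2Z → ℝ → ℂ := fun M y => gg k n (((qfComp a b c M).1 : ℤ) : ℝ)
    (((qfComp a b c M).2.1 : ℤ) : ℝ) (((qfComp a b c M).2.2 : ℤ) : ℝ) (y : ℂ) with hF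
  set D : ℝ := ((4 * a * c - b ^ 2 : ℤ) : ℝ) with hDdef
  have hD0 : 0 < D := by rw [hDdef]; exact_mod_cast (by linarith : 0 < 4 * a * c - b ^ 2)
  have hA : ∀ M : SL2Z, 1 ≤ (qfComp a b c M).1 := fun M => by
    refine qf_pos ha hd ?_
    rintro ⟨h1, h2⟩
    have := det_eq M
    rw [h1, h2] at this; simp at this
  have hC : ∀ M : SL2Z, 1 ≤ (qfComp a b c M).2.2 := fun M => by
    refine qf_pos ha hd ?_
    rintro ⟨h1, h2⟩
    have := det_eq M
    rw [h1, h2] at this; simp at this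
  have hAR : ∀ M : SL2Z, (1 : ℝ) ≤ ((qfComp a b c M).1 : ℝ) := fun M => by exact_mod_cast hA M
  have hCR : ∀ M : SL2Z, (1 : ℝ) ≤ ((qfComp a b c M).2.2 : ℝ) := fun M => by exact_mod_cast hC M
  have hB : ∀ M : SL2Z, (1 : ℝ) ≤ ((qfComp a b c M).2.1 : ℝ) ^ 2 := fun M => by
    have h0 := B_ne ha hd hre M
    have : 0 < (qfComp a b c M).2.1 ^ 2 := by positivity
    exact_mod_cast this
  have hdisc : ∀ M : SL2Z, 4 * ((qfComp a b c M).1 : ℝ) * ((qfComp a b c M).2.2 : ℝ) =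
      ((qfComp a b c M).2.1 : ℝ) ^ 2 + D := fun M => by
    have hdet := det_eq M
    have : 4 * (qfComp a b c M).1 * (qfComp a b c M).2.2 =
      (qfComp a b c M).2.1 ^ 2 + (4 * a * c - b ^ 2) := by
      unfold qfComp
      linear_combination (4 * a * c - b ^ 2) *
        (M.1 0 0 * M.1 1 1 - M.1 0 1 * M.1 1 0 + 1) * hdet
    rw [hDdef]; exact_mod_cast this
  have hint := fun M => gg_integrable hn0 hn1 (hAR M) (hCR M) hD0.le (hB M) (hdisc M)
  have hac : 0 < (4 * (a + c) : ℝ) := by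
    have : 0 < a + c := by nlinarith [sq_nonneg b]
    have : (0 : ℝ) < a + c := by exact_mod_cast this
    linarith
  have hsum : Summable (fun M : SL2Z => ∫ y in Set.Ioi (0 : ℝ), ‖F M y‖) := by
    refine Summable.of_nonneg_of_le (fun M => integral_nonneg fun y => norm_nonneg _)
      (fun M => (hint M).2) ?_
    refine Summable.mul_left _ ?_
    refine Summable.of_nonneg_of_le (fun M => ?_) (fun M => ?_)
      (summable_SL.mul_left ((4 * (a + c) : ℝ) ^ 2 / D ^ 2))
    · have := hAR M
      have := hCR M
      positivity
    · have l1 := qfP_lower hd (M.1 0 0) (M.1 1 0)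
      have l2 := qfP_lower hd (M.1 0 1) (M.1 1 1)
      change D * _ ≤ _ * ((qfComp a b c M).1 : ℝ) at l1
      change D * _ ≤ _ * ((qfComp a b c M).2.2 : ℝ) at l2
      have hA1 := hAR M
      have hC1 := hCR M
      set A : ℝ := ((qfComp a b c M).1 : ℝ)
      set C : ℝ := ((qfComp a b c M).2.2 : ℝ)
      set X : ℝ := (M.1 0 0 : ℝ) ^ 2 + (M.1 1 0 : ℝ) ^ 2 with hX
      set Y : ℝ := (M.1 0 1 : ℝ) ^ 2 + (M.1 1 1 : ℝ) ^ 2 with hY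
      have hdet : (M.1 0 0 : ℝ) * M.1 1 1 - M.1 0 1 * M.1 1 0 = 1 := by exact_mod_cast det_eq M
      have hXY : 1 ≤ X * Y := by
        rw [hX, hY]
        nlinarith [sq_nonneg ((M.1 0 0 : ℝ) * M.1 0 1 + M.1 1 0 * M.1 1 1)]
      have hX0 : 0 ≤ X := by positivity
      have hY0 : 0 ≤ Y := by positivity
      have l3 := mul_le_mul l1 l2 (by positivity) (by positivity)
      rw [div_mul_div_comm, mul_one, div_le_div_iff₀ (by positivity) (by positivity)]
      have hAC : 0 < (4 * (a + c) : ℝ) ^ 2 * (A * C) := by positivity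
      nlinarith
  have hsw := integral_tsum_of_summable_integral_norm (fun M => (hint M).1) hsum
  obtain ⟨K, hK⟩ : ∃ K : ℝ, periodN n (fkP k a b c) =
      K * ∑' M, ∫ y in Set.Ioi (0 : ℝ), F M y := by
    refine ⟨((b ^ 2 - 4 * a * c).natAbs : ℝ) ^ ((k : ℝ) - 1 / 2) / (2 * π * (wP a b c : ℝ)), ?_⟩
    rw [hsw, ← integral_const_mul]
    unfold periodN
    congr 1
    funext y
    unfold fkP
    simp only [qfC_eq]
    rw [mul_assoc, ← tsum_mul_right]
    push_cast
    rfl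
  have hJ := fun M => J_all hn1 (hAR M) (fun h => by have := hB M; rw [h] at this; norm_num at this)
    (by linarith [hCR M]) (hint M).1
  rw [hK, map_mul, conj_ofReal, Complex.conj_tsum]
  have : ∀ M, (starRingEnd ℂ) (∫ y in Set.Ioi (0 : ℝ), F M y) =
      (-1) ^ (n + 1) * ∫ y in Set.Ioi (0 : ℝ), F M y := fun M => by
    have h := hJ M
    have h2 : ((-1 : ℂ) ^ n) * (-1) ^ n = 1 := by rw [← mul_pow]; simp
    linear_combination (-1 : ℂ) ^ n * h - (starRingEnd ℂ) (∫ y in Set.Ioi (0 : ℝ), F M y) * h2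
  simp only [this]
  rw [tsum_mul_left]
  have h2 : ((-1 : ℂ) ^ n) * (-1) ^ (n + 1) = -1 := by rw [pow_succ, ← mul_assoc, ← mul_pow]; simp
  linear_combination K * (∑' M, ∫ y in Set.Ioi (0 : ℝ), F M y) * h2

/-- for `0 < n < 2k-2`, the period `r_n(f_{k,P})` is real for odd `n` and purely
imaginary for even `n`. -/
theorem period_fkP_real_or_imaginary (k n : ℕ) (hk : 2 ≤ k) (hn0 : 0 < n) (hn1 : n < 2 * k - 2)
    (a b c : ℤ) (ha : 0 < a) (hd : b ^ 2 - 4 * a * c < 0)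
    (hre : ∀ M : SL2Z, (moeb M (cmPoint a b c)).re ≠ 0) :
    (Odd n → (periodN n (fkP k a b c)).im = 0) ∧
    (Even n → (periodN n (fkP k a b c)).re = 0) := by
  have h := conj_period k n hn0 hn1 a b c ha hd hre
  constructor
  · intro ho
    rw [ho.neg_one_pow] at h
    have := congrArg Complex.im h
    simp at this
    linarith
  · intro he
    rw [he.neg_one_pow] at h
    have := congrArg Complex.re h
    simp at this
    linarith

end LHMF
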